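/- Let α₁, β₁, α₂, β₂ be irrational numbers that are linearly independent over ℚ. Then lim_{N→∞} (1/N) ∑_{j=1}^N ({jβ₁} − {jα₁})({jβ₂} − {jα₂}) = 0, and for irrational α, β linearly independent over ℚ, lim_{N→∞} (1/N) ∑_{j=1}^N ({jβ} − {jα})² = 1/6. -/

import Mathlib

open Filter Finset

/-!
By Weyl's criterion, linear independence of `1, x₁, …, xₙ` over `ℚ` makes the multiples
`j • (x₁, …, xₙ)` equidistributed on the torus: the averages of a nontrivial character along them
are geometric means with ratio `≠ 1`, hence tend to `0`, and the characters span a dense subspace of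
the continuous functions. Taking fractional parts maps the torus to the cube `[0, 1]ⁿ`, preserves
the measure and is discontinuous only on a null set, so the fractional parts are equidistributed in
the cube. Averages of `∏ fᵢ {j xᵢ}` therefore tend to `∏ ∫₀¹ fᵢ`; expanding the products, the first
limit is `1/4 - 1/4 - 1/4 + 1/4` and the second is `1/3 + 1/3 - 2 · 1/4`.
-/

open MeasureTheory UnitAddTorus
open scoped Topology ENNReal unitInterval

section WeakConvergence

theorem closure_preimage_subset_of_isClosed {X Y : Type*} [TopologicalSpace X] [TopologicalSpace Y]
    {f : X → Y} {F : Set Y} (hF : IsClosed F) :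
    closure (f ⁻¹' F) ⊆ f ⁻¹' F ∪ {x | ¬ContinuousAt f x} := fun _ hx ↦
  or_iff_not_imp_right.2 fun hfx ↦ hF.closure_subset <|
    closure_mono (Set.image_preimage_subset f F) <| mem_closure_image (not_not.1 hfx) hx

variable {X ι : Type*} [TopologicalSpace X] [MeasurableSpace X] [OpensMeasurableSpace X]
  {L : Filter ι} {μs : ι → ProbabilityMeasure X} {μ : ProbabilityMeasure X}

theorem integrable_continuousMap {𝕜 : Type*} [RCLike 𝕜] [CompactSpace X] (ν : Measure X)
    [IsFiniteMeasure ν] (f : C(X, 𝕜)) : Integrable f ν :=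
  (BoundedContinuousFunction.mkOfCompact f).integrable ν

theorem lipschitzWith_one_integral_continuousMap {𝕜 : Type*} [RCLike 𝕜] [CompactSpace X]
    (ν : Measure X) [IsProbabilityMeasure ν] : LipschitzWith 1 fun f : C(X, 𝕜) ↦ ∫ x, f x ∂ν := by
  refine LipschitzWith.of_dist_le_mul fun f g ↦ ?_
  calc dist (∫ x, f x ∂ν) (∫ x, g x ∂ν) = ‖∫ x, (f - g) x ∂ν‖ := by
        simp [dist_eq_norm,
          integral_sub (integrable_continuousMap ν f) (integrable_continuousMap ν g)]
    _ ≤ ‖f - g‖ * ν.real Set.univ :=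
        norm_integral_le_of_norm_le_const <| .of_forall (f - g).norm_coe_le_norm
    _ = _ := by simp [dist_eq_norm]

theorem tendsto_probabilityMeasure_of_span_dense (𝕜 : Type*) [RCLike 𝕜] [CompactSpace X]
    {S : Set C(X, 𝕜)} (hS : (Submodule.span 𝕜 S).topologicalClosure = ⊤)
    (h : ∀ f ∈ S, Tendsto (fun i ↦ ∫ x, f x ∂(μs i : Measure X)) L
      (𝓝 (∫ x, f x ∂(μ : Measure X)))) :
    Tendsto μs L (𝓝 μ) := by
  let good : Submodule 𝕜 C(X, 𝕜) :=
    { carrier := {f | Tendsto (fun i ↦ ∫ x, f x ∂(μs i : Measure X)) L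
        (𝓝 (∫ x, f x ∂(μ : Measure X)))}
      zero_mem' := by simpa using tendsto_const_nhds
      add_mem' := fun {f g} hf hg ↦ by
        simpa [integral_add (integrable_continuousMap _ f) (integrable_continuousMap _ g)]
          using hf.add hg
      smul_mem' := fun c f hf ↦ by simpa [integral_const_mul] using hf.const_mul c }
  have isClosed_good : IsClosed (good : Set C(X, 𝕜)) :=
    have lipschitz (ν : ProbabilityMeasure X) :=
      lipschitzWith_one_integral_continuousMap (𝕜 := 𝕜) (ν : Measure X)
    (LipschitzWith.uniformEquicontinuous _ 1 fun i ↦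
      lipschitz (μs i)).equicontinuous.isClosed_setOfPred_tendsto (lipschitz μ).continuous
  have good_eq_top : good = ⊤ := top_unique <| hS.ge.trans <|
    Submodule.topologicalClosure_minimal _ (Submodule.span_le.2 h) isClosed_good
  rw [ProbabilityMeasure.tendsto_iff_forall_integral_rclike_tendsto 𝕜]
  exact fun f ↦ (good_eq_top ▸ Submodule.mem_top : f.toContinuousMap ∈ good)

theorem tendsto_map_of_ae_continuousAt [HasOuterApproxClosed X] [L.IsCountablyGenerated]
    {Y : Type*} [TopologicalSpace Y] [MeasurableSpace Y] [OpensMeasurableSpace Y] {f : X → Y}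
    (hf : Measurable f) (hc : ∀ᵐ x ∂(μ : Measure X), ContinuousAt f x) (h : Tendsto μs L (𝓝 μ)) :
    Tendsto (fun i ↦ (μs i).map hf.aemeasurable) L (𝓝 (μ.map hf.aemeasurable)) := by
  refine tendsto_of_forall_isClosed_limsup_le' fun F hF ↦ ?_
  simp only [ProbabilityMeasure.map_apply' _ _ hF.measurableSet]
  calc limsup (fun i ↦ (μs i : Measure X) (f ⁻¹' F)) L
      ≤ limsup (fun i ↦ (μs i : Measure X) (closure (f ⁻¹' F))) L :=
        limsup_le_limsup (.of_forall fun i ↦ measure_mono subset_closure)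
    _ ≤ (μ : Measure X) (closure (f ⁻¹' F)) :=
        ProbabilityMeasure.limsup_measure_closed_le_of_tendsto h isClosed_closure
    _ ≤ (μ : Measure X) (f ⁻¹' F ∪ {x | ¬ContinuousAt f x}) :=
        measure_mono (closure_preimage_subset_of_isClosed hF)
    _ ≤ (μ : Measure X) (f ⁻¹' F) + 0 := (measure_union_le _ _).trans_eq (by rw [ae_iff.1 hc])
    _ = _ := add_zero _

end WeakConvergence

section Equidistribution

variable {X Y : Type*} [MeasurableSpace X] [MeasurableSpace Y]

/-- The uniform distribution on the terms `u 1, …, u (N + 1)`; the shift keeps it a probability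
measure for every `N`. -/
noncomputable def empiricalMeasure (u : ℕ → X) (N : ℕ) : ProbabilityMeasure X :=
  ⟨((N + 1 : ℕ) : ℝ≥0∞)⁻¹ • ∑ j ∈ Icc 1 (N + 1), Measure.dirac (u j),
    ⟨by simp [ENNReal.inv_mul_cancel]⟩⟩

theorem integral_empiricalMeasure [MeasurableSingletonClass X] {E : Type*} [NormedAddCommGroup E]
    [NormedSpace ℝ E] [CompleteSpace E] (u : ℕ → X) (N : ℕ) (f : X → E) :
    ∫ x, f x ∂(empiricalMeasure u N : Measure X) =
      ((N + 1 : ℕ) : ℝ)⁻¹ • ∑ j ∈ Icc 1 (N + 1), f (u j) := by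
  have integrable (j : ℕ) : Integrable f (.dirac (u j)) := integrable_dirac (by simp)
  simp [empiricalMeasure, integral_smul_measure, integral_finsetSum_measure fun j _ ↦ integrable j,
    -Nat.cast_add]

theorem map_empiricalMeasure (u : ℕ → X) (N : ℕ) {f : X → Y} (hf : Measurable f) :
    (empiricalMeasure u N).map hf.aemeasurable = empiricalMeasure (f ∘ u) N := by
  refine Subtype.ext <| (ProbabilityMeasure.toMeasure_map _ _).trans ?_
  simp only [empiricalMeasure, ProbabilityMeasure.coe_mk, Measure.map_smul,
    Measure.map_finset_sum hf.aemeasurable, Measure.map_dirac' hf, Function.comp_apply]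

variable [TopologicalSpace X] [OpensMeasurableSpace X]

/-- The sequence `u 1, u 2, …` is equidistributed with respect to `μ`: its empirical measures
converge weakly to `μ`. -/
def IsEquidistributed (u : ℕ → X) (μ : ProbabilityMeasure X) : Prop :=
  Tendsto (empiricalMeasure u) atTop (𝓝 μ)

theorem IsEquidistributed.map [HasOuterApproxClosed X] [TopologicalSpace Y] [OpensMeasurableSpace Y]
    {u : ℕ → X} {μ : ProbabilityMeasure X} (hu : IsEquidistributed u μ) {f : X → Y}
    (hf : Measurable f) (hc : ∀ᵐ x ∂(μ : Measure X), ContinuousAt f x) :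
    IsEquidistributed (f ∘ u) (μ.map hf.aemeasurable) :=
  (tendsto_map_of_ae_continuousAt hf hc hu).congr fun N ↦ map_empiricalMeasure u N hf

theorem IsEquidistributed.tendsto_average [CompactSpace X] [MeasurableSingletonClass X]
    {u : ℕ → X} {μ : ProbabilityMeasure X} (hu : IsEquidistributed u μ) (f : C(X, ℝ)) :
    Tendsto (fun N : ℕ ↦ (1 / (N : ℝ)) * ∑ j ∈ Icc 1 N, f (u j)) atTop
      (𝓝 (∫ x, f x ∂(μ : Measure X))) := by
  rw [← tendsto_add_atTop_iff_nat 1]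
  have := ProbabilityMeasure.tendsto_iff_forall_integral_tendsto.1 hu
    (BoundedContinuousFunction.mkOfCompact f)
  simpa [integral_empiricalMeasure] using this

end Equidistribution

theorem tendsto_average_pow_of_norm_le_one {𝕜 : Type*} [NormedField 𝕜] [NormedSpace ℝ 𝕜]
    {z : 𝕜} (hz : ‖z‖ ≤ 1) (hz1 : z ≠ 1) :
    Tendsto (fun N : ℕ ↦ (N : ℝ)⁻¹ • ∑ j ∈ Icc 1 N, z ^ j) atTop (𝓝 0) := by
  have norm_sum_le (N : ℕ) : ‖∑ j ∈ Icc 1 N, z ^ j‖ ≤ 2 / ‖z - 1‖ := by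
    rw [← Ico_add_one_right_eq_Icc, geom_sum_Ico hz1 (by lia), norm_div]
    gcongr
    calc ‖z ^ (N + 1) - z ^ 1‖ ≤ ‖z‖ ^ (N + 1) + ‖z‖ ^ 1 :=
        (norm_sub_le _ _).trans_eq (by simp only [norm_pow])
      _ ≤ 1 + 1 := by gcongr <;> exact pow_le_one₀ (norm_nonneg z) hz
      _ = 2 := one_add_one_eq_two
  exact tendsto_inv_atTop_nhds_zero_nat.zero_smul_isBoundedUnder_le
    (isBoundedUnder_of ⟨_, norm_sum_le⟩)

section Torus

variable {ι : Type*} [Fintype ι]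

theorem mFourier_nsmul_apply (k : ι → ℤ) (n : ℕ) (x : UnitAddTorus ι) :
    mFourier k (n • x) = mFourier k x ^ n := by
  simp [mFourier, Finset.prod_pow, fourier_apply, smul_comm _ n, AddCircle.toCircle_nsmul]

theorem integral_mFourier_of_ne_zero {k : ι → ℤ} (hk : k ≠ 0) : ∫ x, mFourier k x = 0 := by
  obtain ⟨i, hi⟩ := Function.ne_iff.1 hk
  have factor_eq_zero : ∫ t : UnitAddCircle, fourier (k i) t = 0 :=
    integral_eq_zero_of_add_right_eq_neg (fourier_add_half_inv_index hi one_pos)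
  calc ∫ x, mFourier k x = ∏ i, ∫ t : UnitAddCircle, fourier (k i) t :=
        integral_fintype_prod_volume_eq_prod fun i t ↦ fourier (k i) t
    _ = 0 := Finset.prod_eq_zero (mem_univ i) factor_eq_zero

instance isProbabilityMeasure_volume_unitAddCircle :
    IsProbabilityMeasure (volume : Measure UnitAddCircle) :=
  ⟨UnitAddCircle.measure_univ⟩

instance nullSingletonClass_volume_unitAddCircle :
    NullSingletonClass (volume : Measure UnitAddCircle) :=
  ⟨fun t ↦ by simpa using AddCircle.volume_closedBall 1 (x := t) 0⟩

theorem isEquidistributed_nsmul {x : UnitAddTorus ι} (hx : ∀ k ≠ 0, mFourier k x ≠ 1) :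
    IsEquidistributed (fun j ↦ j • x) ⟨volume, inferInstance⟩ := by
  refine tendsto_probabilityMeasure_of_span_dense ℂ span_mFourier_closure_eq_top ?_
  rintro _ ⟨k, rfl⟩
  obtain rfl | hk := eq_or_ne k 0
  · simp [mFourier_zero]
  · have norm_le : ‖mFourier k x‖ ≤ 1 :=
      ((mFourier k).norm_coe_le_norm x).trans_eq mFourier_norm
    simp only [integral_empiricalMeasure, mFourier_nsmul_apply, ProbabilityMeasure.coe_mk,
      integral_mFourier_of_ne_zero hk]
    exact (tendsto_average_pow_of_norm_le_one norm_le (hx k hk)).comp (tendsto_add_atTop_nat 1)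

end Torus

section Cube

/-- The representative in `[0, 1)` of a point of the circle `ℝ / ℤ`, as a point of the compact
interval `[0, 1]`. -/
noncomputable def circleFract (t : UnitAddCircle) : I :=
  ⟨AddCircle.equivIco 1 0 t, Set.Ico_subset_Icc_self <| by
    simpa only [zero_add] using (AddCircle.equivIco 1 0 t).2⟩

theorem coe_circleFract_coe (x : ℝ) : (circleFract x : ℝ) = Int.fract x := by
  simp [circleFract, AddCircle.coe_equivIco_mk_apply]

theorem continuousAt_circleFract {t : UnitAddCircle} (ht : t ≠ 0) : ContinuousAt circleFract t :=
  (continuousAt_subtype_val.comp (AddCircle.continuousAt_equivIco 1 0 (by simpa))).codRestrict _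

theorem measurable_circleFract : Measurable circleFract :=
  (measurable_subtype_coe.comp (AddCircle.measurableEquivIco 1 0).measurable).subtype_mk

theorem circleFract_coe_of_ne_one {t : I} (ht : t ≠ 1) : circleFract (t : ℝ) = t :=
  Subtype.ext <| (coe_circleFract_coe t).trans <|
    Int.fract_eq_self.2 ⟨t.2.1, unitInterval.coe_lt_one.2 (unitInterval.lt_one_iff_ne_one.2 ht)⟩

theorem measurePreserving_unitInterval_coe_unitAddCircle :
    MeasurePreserving (fun t : I ↦ ((t : ℝ) : UnitAddCircle)) volume volume := by
  have hmk := UnitAddCircle.measurePreserving_mk 0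
  rw [zero_add, Measure.restrict_congr_set Ioc_ae_eq_Icc] at hmk
  exact hmk.comp unitInterval.measurePreserving_coe

theorem measurePreserving_circleFract : MeasurePreserving circleFract volume volume := by
  refine ⟨measurable_circleFract, ?_⟩
  have circleFract_coe_ae : (fun t : I ↦ circleFract (t : ℝ)) =ᵐ[volume] id := by
    filter_upwards [Measure.ae_ne volume 1] with t ht using circleFract_coe_of_ne_one ht
  rw [← measurePreserving_unitInterval_coe_unitAddCircle.map_eq, Measure.map_map
    measurable_circleFract measurePreserving_unitInterval_coe_unitAddCircle.measurable]
  exact (Measure.map_congr circleFract_coe_ae).trans Measure.map_id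

theorem integral_unitInterval_coe {E : Type*} [NormedAddCommGroup E] [NormedSpace ℝ E]
    (f : ℝ → E) : ∫ t : I, f t = ∫ t in 0..1, f t := by
  rw [unitInterval.measurePreserving_coe.integral_comp unitInterval.measurableEmbedding_coe,
    integral_Icc_eq_integral_Ioc, intervalIntegral.integral_of_le zero_le_one]

variable {ι : Type*} [Fintype ι]

theorem isEquidistributed_fract {x : ι → ℝ}
    (hx : ∀ k ≠ 0, mFourier k (fun i ↦ (x i : UnitAddCircle)) ≠ 1) :
    IsEquidistributed (fun (j : ℕ) i ↦ circleFract (j * x i : ℝ)) ⟨volume, inferInstance⟩ := by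
  have hmp : MeasurePreserving (fun (t : UnitAddTorus ι) i ↦ circleFract (t i)) volume volume :=
    volume_preserving_pi fun _ ↦ measurePreserving_circleFract
  have hc : ∀ᵐ t : UnitAddTorus ι,
      ContinuousAt (fun (t : UnitAddTorus ι) i ↦ circleFract (t i)) t := by
    have : ∀ᵐ t : UnitAddTorus ι, ∀ i, t i ≠ 0 :=
      eventually_all.2 fun i ↦ Measure.ae_eval_ne _ _ _
    filter_upwards [this] with t ht
    exact continuousAt_pi.2 fun i ↦ ContinuousAt.comp (f := fun t : UnitAddTorus ι ↦ t i)
      (continuousAt_circleFract (ht i)) (continuousAt_apply i t)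
  have hcomp : (fun (j : ℕ) i ↦ circleFract (j * x i : ℝ)) =
      (fun (t : UnitAddTorus ι) i ↦ circleFract (t i)) ∘ fun j ↦
        j • fun i ↦ (x i : UnitAddCircle) := by
    ext j i
    simp [← nsmul_eq_mul]
  have hmap : ProbabilityMeasure.map ⟨volume, inferInstance⟩ hmp.aemeasurable =
      ⟨volume, inferInstance⟩ := Subtype.ext hmp.map_eq
  rw [hcomp, ← hmap]
  exact (isEquidistributed_nsmul hx).map hmp.measurable hc

end Cube

section FractionalParts

theorem linearIndependent_subfamily {R M ι κ : Type*} [Semiring R] [AddCommMonoid M] [Module R M]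
    {v : ι → M} {w : κ → M} (hv : LinearIndependent R v) (f : κ → ι) (hf : Function.Injective f)
    (hw : ∀ k, w k = v (f k)) : LinearIndependent R w :=
  (funext hw : w = v ∘ f) ▸ hv.comp f hf

theorem linearIndependent_vecCons_pair {R M : Type*} [Semiring R] [AddCommMonoid M] [Module R M]
    {n : ℕ} {y : M} {v : Fin n → M} (h : LinearIndependent R (Matrix.vecCons y v)) {i k : Fin n}
    (hik : i ≠ k) : LinearIndependent R ![y, v i, v k] :=
  linearIndependent_subfamily h ![0, i.succ, k.succ]
    (by simp [Function.Injective, Fin.forall_fin_succ, hik, hik.symm, (Fin.succ_ne_zero _).symm])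
    (by simp [Fin.forall_fin_succ])

theorem mFourier_coe_eq_one_iff {ι : Type*} [Fintype ι] {k : ι → ℤ} {x : ι → ℝ} :
    mFourier k (fun i ↦ (x i : UnitAddCircle)) = 1 ↔ ∃ m : ℤ, ∑ i, k i * x i = m := by
  have mFourier_eq_exp : mFourier k (fun i ↦ (x i : UnitAddCircle)) =
      Complex.exp ((∑ i, k i * x i : ℝ) * (2 * Real.pi * Complex.I)) := by
    simp only [mFourier, ContinuousMap.coe_mk, fourier_coe_apply, ← Complex.exp_sum]
    push_cast
    rw [Finset.sum_mul]
    congr! 2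
    ring
  simp only [mFourier_eq_exp, Complex.exp_eq_one_iff, mul_left_inj' Complex.two_pi_I_ne_zero]
  norm_cast

variable {n : ℕ} {x : Fin n → ℝ}

theorem mFourier_coe_ne_one (hx : LinearIndependent ℚ (Matrix.vecCons 1 x)) {k : Fin n → ℤ}
    (hk : k ≠ 0) : mFourier k (fun i ↦ (x i : UnitAddCircle)) ≠ 1 := by
  rw [Ne, mFourier_coe_eq_one_iff]
  rintro ⟨m, hm⟩
  have coeff_eq_zero := Fintype.linearIndependent_iff.1 hx (Matrix.vecCons (-m) fun i ↦ k i) <| by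
    simp [Fin.sum_univ_succ, Rat.smul_def, hm]
  exact hk <| funext fun i ↦ by simpa using coeff_eq_zero i.succ

theorem tendsto_average_prod_fract (hx : LinearIndependent ℚ (Matrix.vecCons 1 x))
    {f : Fin n → ℝ → ℝ} (hf : ∀ i, ContinuousOn (f i) I) :
    Tendsto (fun N : ℕ ↦ (1 / (N : ℝ)) * ∑ j ∈ Icc 1 N, ∏ i, f i (Int.fract (j * x i))) atTop
      (𝓝 (∏ i, ∫ t in 0..1, f i t)) := by
  let F : C(Fin n → I, ℝ) := ⟨fun t ↦ ∏ i, f i (t i), continuous_finsetProd _ fun i _ ↦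
    (continuousOn_iff_continuous_domRestrict.1 (hf i)).comp (continuous_apply i)⟩
  have integral_F : ∫ t, F t = ∏ i, ∫ t in 0..1, f i t := by
    simp only [← integral_unitInterval_coe]
    exact integral_fintype_prod_volume_eq_prod fun i (t : I) ↦ f i t
  have tendsto_F := (isEquidistributed_fract fun k hk ↦ mFourier_coe_ne_one hx hk).tendsto_average F
  rw [ProbabilityMeasure.coe_mk, integral_F] at tendsto_F
  simpa only [F, ContinuousMap.coe_mk, coe_circleFract_coe] using tendsto_F

theorem tendsto_average_fract_mul_fract {x y : ℝ} (h : LinearIndependent ℚ ![1, x, y]) :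
    Tendsto (fun N : ℕ ↦ (1 / (N : ℝ)) * ∑ j ∈ Icc 1 N, Int.fract (j * x) * Int.fract (j * y))
      atTop (𝓝 (1 / 4)) := by
  convert tendsto_average_prod_fract h (f := fun _ t ↦ t) fun _ ↦ continuousOn_id using 2
  · simp [Fin.prod_univ_two]
  · norm_num [Fin.prod_univ_two]

theorem tendsto_average_fract_sq {x : ℝ} (h : LinearIndependent ℚ ![1, x]) :
    Tendsto (fun N : ℕ ↦ (1 / (N : ℝ)) * ∑ j ∈ Icc 1 N, Int.fract (j * x) ^ 2)
      atTop (𝓝 (1 / 3)) := by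
  convert tendsto_average_prod_fract h (f := fun _ t ↦ t ^ 2) fun _ ↦ continuousOn_pow 2 using 2
  · simp
  · norm_num

theorem tendsto_average_fract_sub_mul_fract_sub {α₁ β₁ α₂ β₂ : ℝ}
    (hββ : LinearIndependent ℚ ![1, β₁, β₂]) (hβα : LinearIndependent ℚ ![1, β₁, α₂])
    (hαβ : LinearIndependent ℚ ![1, α₁, β₂]) (hαα : LinearIndependent ℚ ![1, α₁, α₂]) :
    Tendsto (fun N : ℕ ↦ (1 / (N : ℝ)) * ∑ j ∈ Icc 1 N,
      (Int.fract (j * β₁) - Int.fract (j * α₁)) * (Int.fract (j * β₂) - Int.fract (j * α₂)))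
      atTop (𝓝 0) := by
  convert ((tendsto_average_fract_mul_fract hββ).sub (tendsto_average_fract_mul_fract hβα)).sub
    ((tendsto_average_fract_mul_fract hαβ).sub (tendsto_average_fract_mul_fract hαα)) using 2
  · simp only [← mul_sub, ← Finset.sum_sub_distrib]
    congr! 2
    ring
  · norm_num

theorem tendsto_average_fract_sub_sq {α β : ℝ} (h : LinearIndependent ℚ ![1, α, β]) :
    Tendsto (fun N : ℕ ↦ (1 / (N : ℝ)) * ∑ j ∈ Icc 1 N,
      (Int.fract (j * β) - Int.fract (j * α)) ^ 2) atTop (𝓝 (1 / 6)) := by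
  have hα : LinearIndependent ℚ ![1, α] :=
    linearIndependent_subfamily h ![0, 1] (by decide) (by simp [Fin.forall_fin_succ])
  have hβ : LinearIndependent ℚ ![1, β] :=
    linearIndependent_subfamily h ![0, 2] (by decide) (by simp [Fin.forall_fin_succ])
  convert ((tendsto_average_fract_sq hβ).add (tendsto_average_fract_sq hα)).sub
    ((tendsto_average_fract_mul_fract h).const_mul 2) using 2
  · rw [mul_left_comm 2, ← mul_add, ← mul_sub, Finset.mul_sum _ _ 2, ← Finset.sum_add_distrib,
      ← Finset.sum_sub_distrib]
    congr! 2
    ring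
  · norm_num

end FractionalParts

theorem stmt_16_general {α₁ β₁ α₂ β₂ : ℝ}
    (hββ : LinearIndependent ℚ ![1, β₁, β₂]) (hβα : LinearIndependent ℚ ![1, β₁, α₂])
    (hαβ : LinearIndependent ℚ ![1, α₁, β₂]) (hαα : LinearIndependent ℚ ![1, α₁, α₂]) :
    Tendsto
      (fun N : ℕ =>
        (1 / (N : ℝ)) *
          ∑ j ∈ Finset.Icc 1 N,
            (Int.fract ((j : ℝ) * β₁) - Int.fract ((j : ℝ) * α₁)) *
            (Int.fract ((j : ℝ) * β₂) - Int.fract ((j : ℝ) * α₂)))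
      atTop (nhds 0) ∧
    ∀ α β : ℝ, LinearIndependent ℚ ![1, α, β] →
        Tendsto
          (fun N : ℕ =>
            (1 / (N : ℝ)) *
              ∑ j ∈ Finset.Icc 1 N,
                (Int.fract ((j : ℝ) * β) - Int.fract ((j : ℝ) * α)) ^ 2)
          atTop (nhds (1 / 6)) :=
  ⟨tendsto_average_fract_sub_mul_fract_sub hββ hβα hαβ hαα,
    fun _ _ ↦ tendsto_average_fract_sub_sq⟩

/-- If `α₁, β₁, α₂, β₂` are irrational and linearly independent over `ℚ`
(i.e. `1, α₁, β₁, α₂, β₂` are `ℚ`-linearly independent), then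
`lim (1/N) ∑_{j=1}^N ({jβ₁} − {jα₁})({jβ₂} − {jα₂}) = 0`; and for irrational `α, β`
linearly independent over `ℚ`, `lim (1/N) ∑_{j=1}^N ({jβ} − {jα})² = 1/6`. -/
theorem stmt_16 (α₁ β₁ α₂ β₂ : ℝ)
    (h₁ : Irrational α₁) (h₂ : Irrational β₁) (h₃ : Irrational α₂) (h₄ : Irrational β₂)
    (hind : LinearIndependent ℚ ![(1 : ℝ), α₁, β₁, α₂, β₂]) :
    Tendsto
      (fun N : ℕ =>
        (1 / (N : ℝ)) *
          ∑ j ∈ Finset.Icc 1 N,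
            (Int.fract ((j : ℝ) * β₁) - Int.fract ((j : ℝ) * α₁)) *
            (Int.fract ((j : ℝ) * β₂) - Int.fract ((j : ℝ) * α₂)))
      atTop (nhds 0)
    ∧ ∀ α β : ℝ, Irrational α → Irrational β →
        LinearIndependent ℚ ![(1 : ℝ), α, β] →
        Tendsto
          (fun N : ℕ =>
            (1 / (N : ℝ)) *
              ∑ j ∈ Finset.Icc 1 N,
                (Int.fract ((j : ℝ) * β) - Int.fract ((j : ℝ) * α)) ^ 2)
          atTop (nhds (1 / 6)) := by
  have pair (i k : Fin 4) (hik : i ≠ k := by decide) := linearIndependent_vecCons_pair hind hik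
  exact (stmt_16_general (pair 1 3) (pair 1 2) (pair 0 3) (pair 0 2)).imp_right
    fun general α β _ _ ↦ general α β
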